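/- Let p ≥ 6, u = 2^(1−p), and let o_x, o_y ∈ [1, 1/(8u) − 2]. Let x_h, x_l, y_h, y_l ∈ F_p satisfy |x_l| ≤ o_x·u·|x_h| and |y_l| ≤ o_y·u·|y_h|, and let S = x_h + x_l + y_h + y_l. If accurate double-word addition is executed with R = RD at every operation, then z_h + z_l ≤ S; if it is executed with R = RU at every operation, then z_h + z_l ≥ S. (The sign of the error is consistent with the rounding direction, even in the presence of moderate input overlap.) -/

import Mathlib

/-!
Negation exchanges `RD` and `RU` (`ru_neg`), so it suffices to treat `RD`.

Each operation with `RD` returns at most its exact value, so the error can only get the wrong sign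
where a rounded result is subtracted: `s + t ≤ a + b` holds for `2Sum` as soon as `s - a'` is a
floating-point number, and for `Fast2Sum` as soon as `s - a` is one. Granting this,
`z_h + z_l ≤ v_h + w ≤ v_h + v_l + t_l ≤ s_h + c + t_l ≤ s_h + s_l + t_h + t_l ≤ S`.

* For `2Sum`, the number `s - a'` is always in `F_p` (`twoSum_aux`); the same case analysis bounds
  the error term by `2u|a + b|` (`twoSum_snd`).
* For `Fast2Sum a b`, the number `s - a` is in `F_p` if `a` is a multiple of some `2^k` with
  `|b| < 2^(p+k)` (`fast_mem`), in particular if `|b| ≤ |a|` (`fast_mem_of_abs_le`).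

It remains to verify this criterion for the two calls of `Fast2Sum`. It is a matter of magnitudes
unless there is cancellation. If `|x_h + y_h| ≤ (|x_h| + |y_h|)/6`, the first sum is exact and a
multiple of the ulp of the smaller of the high words (`cancel`), whereas `c = t_h` is still small
compared with `2^p` such ulps. If moreover `s_h + t_h` cancels, then it is exact as well and a
multiple of half the ulp of `t_h`, whereas `w` is at most a few ulps of `t_h`.

Powers are normalised by writing `P = 2^p`, so that `2^(p+e) = P * 2^e` and `u = 2 / P`.
-/

/-- The radix-2, precision-`p` floating-point numbers with unlimited exponent range. -/
def Fp (p : ℕ) : Set ℝ := {x : ℝ | ∃ M e : ℤ, |M| ≤ 2 ^ p - 1 ∧ x = (M : ℝ) * (2 : ℝ) ^ e}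

/-- Round toward `-∞`: the largest floating-point number `≤ x`. -/
noncomputable def RD (p : ℕ) (x : ℝ) : ℝ := sSup {f : ℝ | f ∈ Fp p ∧ f ≤ x}

/-- Round toward `+∞`: the smallest floating-point number `≥ x`. -/
noncomputable def RU (p : ℕ) (x : ℝ) : ℝ := sInf {f : ℝ | f ∈ Fp p ∧ x ≤ f}

/-- `y` is a faithful rounding of `x`. -/
def Faithful (p : ℕ) (x y : ℝ) : Prop := y = RD p x ∨ y = RU p x

/-- `2Sum(a,b)` with rounding function `R`. -/
noncomputable def twoSum (R : ℝ → ℝ) (a b : ℝ) : ℝ × ℝ :=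
  let s := R (a + b)
  let a' := R (s - b)
  let b' := R (s - a')
  (s, R (R (a - a') + R (b - b')))

/-- `Fast2Sum(a,b)` with rounding function `R`. -/
noncomputable def fast2Sum (R : ℝ → ℝ) (a b : ℝ) : ℝ × ℝ :=
  let s := R (a + b)
  let d := R (s - a)
  (s, R (b - d))

/-- Accurate double-word addition with rounding function `R`. -/
noncomputable def accurateAdd (R : ℝ → ℝ) (xh xl yh yl : ℝ) : ℝ × ℝ :=
  let s := twoSum R xh yh
  let t := twoSum R xl yl
  let c := R (s.2 + t.1)
  let v := fast2Sum R s.1 c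
  let w := R (t.2 + v.2)
  fast2Sum R v.1 w

/-- `x` is an integer multiple of `2^e`. -/
def Mul2 (e : ℤ) (x : ℝ) : Prop := ∃ m : ℤ, x = (m : ℝ) * (2 : ℝ) ^ e

/-! ### Multiples of powers of two and membership in `F_p` -/

lemma Mul2.add {e : ℤ} {x y : ℝ} (hx : Mul2 e x) (hy : Mul2 e y) : Mul2 e (x + y) := by
  obtain ⟨m, rfl⟩ := hx
  obtain ⟨n, rfl⟩ := hy
  exact ⟨m + n, by push_cast; ring⟩

lemma Mul2.neg {e : ℤ} {x : ℝ} (hx : Mul2 e x) : Mul2 e (-x) := by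
  obtain ⟨m, rfl⟩ := hx
  exact ⟨-m, by push_cast; ring⟩

lemma Mul2.sub {e : ℤ} {x y : ℝ} (hx : Mul2 e x) (hy : Mul2 e y) : Mul2 e (x - y) := by
  rw [sub_eq_add_neg]
  exact hx.add hy.neg

lemma Mul2.mono {e f : ℤ} (h : e ≤ f) {x : ℝ} (hx : Mul2 f x) : Mul2 e x := by
  obtain ⟨m, rfl⟩ := hx
  obtain ⟨n, rfl⟩ := Int.le.dest h
  refine ⟨m * 2 ^ n, ?_⟩
  rw [zpow_add₀ (by norm_num : (2 : ℝ) ≠ 0)]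
  push_cast
  rw [zpow_natCast]
  ring

lemma q_pos (e : ℤ) : (0 : ℝ) < (2 : ℝ) ^ e := by positivity

lemma q_le {e f : ℤ} (h : e ≤ f) : (2 : ℝ) ^ e ≤ (2 : ℝ) ^ f :=
  zpow_le_zpow_right₀ (by norm_num) h

lemma q_succ (e : ℤ) : (2 : ℝ) ^ (e + 1) = 2 * (2 : ℝ) ^ e := by
  rw [zpow_add₀ (by norm_num : (2 : ℝ) ≠ 0)]
  simp [mul_comm]

lemma q_lt {e f : ℤ} (h : e < f) : 2 * (2 : ℝ) ^ e ≤ (2 : ℝ) ^ f := by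
  rw [← q_succ]
  exact q_le h

/-- A multiple of `2^e` of absolute value less than `2^(p+e) + 2^e` has absolute value at most
`2^(p+e)`, hence is a floating-point number. -/
lemma mem_of {p : ℕ} (hp : 1 ≤ p) {e : ℤ} {x : ℝ} (hx : Mul2 e x)
    (h : |x| < (2 : ℝ) ^ p * (2 : ℝ) ^ e + (2 : ℝ) ^ e) : x ∈ Fp p := by
  obtain ⟨m, rfl⟩ := hx
  have hq := q_pos e
  rw [abs_mul, abs_of_pos hq] at h
  have h1 : |(m : ℝ)| < 2 ^ p + 1 := by
    by_contra! hc
    nlinarith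
  have h2 : |m| < 2 ^ p + 1 := by exact_mod_cast h1
  have hpp : (2 : ℤ) ≤ 2 ^ p := by
    calc (2 : ℤ) = 2 ^ 1 := by norm_num
      _ ≤ 2 ^ p := pow_le_pow_right₀ (by norm_num) hp
  rcases lt_or_ge |m| (2 ^ p) with h3 | h3
  · exact ⟨m, e, by omega, rfl⟩
  · have h4 : |m| = 2 ^ p := by omega
    have hz : (2 : ℝ) ^ ((p : ℤ) + e) = 2 ^ p * (2 : ℝ) ^ e := by
      rw [zpow_add₀ (by norm_num : (2 : ℝ) ≠ 0), zpow_natCast]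
    rcases abs_choice m with h5 | h5
    · refine ⟨1, p + e, by simp only [abs_one]; omega, ?_⟩
      rw [hz, ← h5, h4]
      push_cast
      ring
    · refine ⟨-1, p + e, by simp only [abs_neg, abs_one]; omega, ?_⟩
      have : m = -2 ^ p := by omega
      rw [hz, this]
      push_cast
      ring

lemma mul2_or {p : ℕ} {x : ℝ} (hx : x ∈ Fp p) (e : ℤ) :
    Mul2 e x ∨ 2 * |x| < (2 : ℝ) ^ p * (2 : ℝ) ^ e := by
  obtain ⟨M, f, hM, rfl⟩ := hx
  rcases le_or_gt e f with h | h
  · exact Or.inl (Mul2.mono h ⟨M, rfl⟩)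
  · right
    have h1 := q_lt h
    have hq := q_pos f
    rw [abs_mul, abs_of_pos hq]
    have h2 : |M| < 2 ^ p := by omega
    have h3 : |(M : ℝ)| < 2 ^ p := by exact_mod_cast h2
    have hP : (0 : ℝ) < 2 ^ p := by positivity
    nlinarith

lemma mul2_of_le {p : ℕ} {x : ℝ} (hx : x ∈ Fp p) {e : ℤ}
    (h : (2 : ℝ) ^ p * (2 : ℝ) ^ e ≤ 2 * |x|) : Mul2 e x :=
  (mul2_or hx e).resolve_right (not_lt.mpr h)

lemma neg_mem_Fp {p : ℕ} {x : ℝ} (hx : x ∈ Fp p) : -x ∈ Fp p := by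
  obtain ⟨M, e, hM, rfl⟩ := hx
  exact ⟨-M, e, by rwa [abs_neg], by push_cast; ring⟩

lemma zero_mem_Fp (p : ℕ) : (0 : ℝ) ∈ Fp p :=
  ⟨0, 0, by have : (1 : ℤ) ≤ 2 ^ p := one_le_pow₀ (by norm_num)
            simp only [abs_zero]; omega, by simp⟩

/-- The binade of a nonzero real: `2^(p-1+e) ≤ |x| < 2^(p+e)`. -/
lemma exists_exp (p : ℕ) {x : ℝ} (hx : x ≠ 0) :
    ∃ e : ℤ, (2 : ℝ) ^ p * (2 : ℝ) ^ e ≤ 2 * |x| ∧ |x| < (2 : ℝ) ^ p * (2 : ℝ) ^ e := by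
  have hx' : 0 < |x| := abs_pos.mpr hx
  have h1 := Int.zpow_log_le_self (b := 2) (by norm_num) hx'
  have h2 := Int.lt_zpow_succ_log_self (b := 2) (by norm_num) |x|
  push_cast at h1 h2
  refine ⟨Int.log 2 |x| + 1 - p, ?_⟩
  have : (2 : ℝ) ^ p * (2 : ℝ) ^ (Int.log 2 |x| + 1 - (p : ℤ)) = 2 ^ (Int.log 2 |x| + 1) := by
    rw [← zpow_natCast, ← zpow_add₀ (by norm_num : (2 : ℝ) ≠ 0)]
    congr 1
    ring
  rw [this]
  refine ⟨?_, h2⟩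
  rw [q_succ]
  linarith

/-! ### Rounding down -/

/-- In the binade with ulp `2^e`, rounding down is taking the floor in units of `2^e`. -/
lemma floor_isGreatest {p : ℕ} (hp : 1 ≤ p) {x : ℝ} {e : ℤ}
    (h1 : (2 : ℝ) ^ p * (2 : ℝ) ^ e ≤ 2 * |x|) (h2 : |x| < (2 : ℝ) ^ p * (2 : ℝ) ^ e) :
    IsGreatest {f : ℝ | f ∈ Fp p ∧ f ≤ x} ((⌊x / (2 : ℝ) ^ e⌋ : ℝ) * (2 : ℝ) ^ e) := by
  have hq := q_pos e
  have hfl : (⌊x / (2 : ℝ) ^ e⌋ : ℝ) * (2 : ℝ) ^ e ≤ x := by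
    rw [← le_div_iff₀ hq]
    exact Int.floor_le _
  have hfl2 : x < (⌊x / (2 : ℝ) ^ e⌋ : ℝ) * (2 : ℝ) ^ e + (2 : ℝ) ^ e := by
    have := Int.lt_floor_add_one (x / (2 : ℝ) ^ e)
    rw [div_lt_iff₀ hq] at this
    linarith
  have hx := abs_lt.mp h2
  refine ⟨⟨mem_of hp ⟨_, rfl⟩ ?_, hfl⟩, ?_⟩
  · rw [abs_lt]
    constructor <;> linarith
  · rintro f ⟨hf, hfx⟩
    have key : ∀ m : ℤ, (m : ℝ) * (2 : ℝ) ^ e ≤ x →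
        (m : ℝ) * (2 : ℝ) ^ e ≤ (⌊x / (2 : ℝ) ^ e⌋ : ℝ) * (2 : ℝ) ^ e := by
      intro m hm
      have : m ≤ ⌊x / (2 : ℝ) ^ e⌋ := Int.le_floor.mpr ((le_div_iff₀ hq).mpr hm)
      have : (m : ℝ) ≤ (⌊x / (2 : ℝ) ^ e⌋ : ℝ) := by exact_mod_cast this
      exact mul_le_mul_of_nonneg_right this hq.le
    rcases mul2_or hf e with ⟨m, rfl⟩ | h
    · exact key m hfx
    · -- `f` lies strictly below the binade of `x` in absolute value, so `x > 0`
      have hf' := abs_lt.mp (show |f| < (2 : ℝ) ^ p * (2 : ℝ) ^ e / 2 by linarith)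
      rcases le_or_gt 0 x with h0 | h0
      · rw [abs_of_nonneg h0] at h1
        obtain ⟨n, rfl⟩ : ∃ n, p = n + 1 := ⟨p - 1, by omega⟩
        have := key (2 ^ n) (by push_cast; rw [pow_succ] at h1; linarith)
        push_cast at this
        rw [pow_succ] at hf'
        linarith [hf'.2]
      · rw [abs_of_neg h0] at h1
        linarith [hf'.1]

lemma rd_isGreatest {p : ℕ} (hp : 1 ≤ p) (x : ℝ) :
    IsGreatest {f : ℝ | f ∈ Fp p ∧ f ≤ x} (RD p x) := by
  have : ∃ y, IsGreatest {f : ℝ | f ∈ Fp p ∧ f ≤ x} y := by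
    by_cases hx : x = 0
    · subst hx
      exact ⟨0, ⟨zero_mem_Fp p, le_rfl⟩, fun f hf => hf.2⟩
    · obtain ⟨e, h1, h2⟩ := exists_exp p hx
      exact ⟨_, floor_isGreatest hp h1 h2⟩
  obtain ⟨y, hy⟩ := this
  rw [RD, hy.csSup_eq]
  exact hy

lemma rd_mem {p : ℕ} (hp : 1 ≤ p) (x : ℝ) : RD p x ∈ Fp p := (rd_isGreatest hp x).1.1

lemma rd_le {p : ℕ} (hp : 1 ≤ p) (x : ℝ) : RD p x ≤ x := (rd_isGreatest hp x).1.2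

lemma le_rd {p : ℕ} (hp : 1 ≤ p) {x f : ℝ} (hf : f ∈ Fp p) (h : f ≤ x) : f ≤ RD p x :=
  (rd_isGreatest hp x).2 ⟨hf, h⟩

lemma rd_eq {p : ℕ} (hp : 1 ≤ p) {x : ℝ} (hx : x ∈ Fp p) : RD p x = x :=
  le_antisymm (rd_le hp x) (le_rd hp hx le_rfl)

lemma rd_spec {p : ℕ} (hp : 1 ≤ p) {x : ℝ} (hx : x ≠ 0) :
    ∃ e : ℤ, (2 : ℝ) ^ p * (2 : ℝ) ^ e ≤ 2 * |x| ∧ |x| < (2 : ℝ) ^ p * (2 : ℝ) ^ e ∧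
      Mul2 e (RD p x) ∧ x < RD p x + (2 : ℝ) ^ e ∧ |RD p x| ≤ (2 : ℝ) ^ p * (2 : ℝ) ^ e ∧
      (2 : ℝ) ^ p * (2 : ℝ) ^ e ≤ 2 * |RD p x| := by
  obtain ⟨e, h1, h2⟩ := exists_exp p hx
  have hq := q_pos e
  have hg := (rd_isGreatest hp x).unique (floor_isGreatest hp h1 h2)
  have hle := rd_le hp x
  have hx := abs_lt.mp h2
  -- the end points of the binade are floating-point numbers
  have hm : -((2 : ℝ) ^ p * (2 : ℝ) ^ e) ∈ Fp p := by
    refine mem_of hp (e := e) ⟨-2 ^ p, by push_cast; ring⟩ ?_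
    rw [abs_neg, abs_of_pos (by positivity)]
    linarith
  have hm2 : (2 : ℝ) ^ p * (2 : ℝ) ^ e / 2 ∈ Fp p := by
    obtain ⟨n, rfl⟩ : ∃ n, p = n + 1 := ⟨p - 1, by omega⟩
    refine mem_of hp (e := e) ⟨2 ^ n, by push_cast; rw [pow_succ]; ring⟩ ?_
    rw [abs_of_pos (by positivity)]
    have : 0 < (2 : ℝ) ^ (n + 1) * (2 : ℝ) ^ e := by positivity
    linarith
  have hlow := le_rd hp hm hx.1.le
  refine ⟨e, h1, h2, ⟨_, hg⟩, ?_, abs_le.mpr ⟨hlow, by linarith⟩, ?_⟩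
  · have := Int.lt_floor_add_one (x / (2 : ℝ) ^ e)
    rw [div_lt_iff₀ hq] at this
    rw [hg]
    linarith
  · rcases le_or_gt 0 x with h0 | h0
    · rw [abs_of_nonneg h0] at h1
      have := le_rd hp hm2 (show _ ≤ x by linarith)
      linarith [le_abs_self (RD p x)]
    · rw [abs_of_neg h0] at h1
      linarith [neg_abs_le (RD p x)]

lemma rd_err {p : ℕ} (hp : 1 ≤ p) {u : ℝ} (hu : u * 2 ^ p = 2) (x : ℝ) :
    x - RD p x ≤ u * |x| := by
  by_cases hx : x = 0
  · subst hx
    simp [rd_eq hp (zero_mem_Fp p)]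
  · obtain ⟨e, h1, -, -, h2, -⟩ := rd_spec hp hx
    have hP : (0 : ℝ) < 2 ^ p := by positivity
    have hu0 : 0 < u := by by_contra! h; nlinarith
    have : u * (2 ^ p * (2 : ℝ) ^ e) = 2 * (2 : ℝ) ^ e := by rw [← mul_assoc, hu]
    nlinarith

lemma rd_abs_le {p : ℕ} (hp : 1 ≤ p) {u : ℝ} (hu : u * 2 ^ p = 2) (x : ℝ) :
    |RD p x| ≤ (1 + u) * |x| := by
  have h1 := rd_err hp hu x
  have h2 := rd_le hp x
  have : |RD p x - x| ≤ u * |x| := by rw [abs_sub_comm, abs_of_nonneg (by linarith)]; exact h1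
  have := abs_sub_abs_le_abs_sub (RD p x) x
  linarith

lemma le_rd_abs {p : ℕ} (hp : 1 ≤ p) {u : ℝ} (hu : u * 2 ^ p = 2) (x : ℝ) :
    (1 - u) * |x| ≤ |RD p x| := by
  have h1 := rd_err hp hu x
  have h2 := rd_le hp x
  have : |x - RD p x| ≤ u * |x| := by rw [abs_of_nonneg (by linarith)]; exact h1
  have := abs_sub_abs_le_abs_sub x (RD p x)
  linarith

/-! ### `2Sum` and `Fast2Sum` -/

/-- With `s = RD(a+b)` and `a' = RD(s-b)`, the subtraction `s - a'` is exact, and the error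
committed in `a'` is less than two ulps of `a + b`. -/
lemma twoSum_aux {p : ℕ} (hp : 2 ≤ p) {a b : ℝ} (ha : a ∈ Fp p) (hb : b ∈ Fp p) {e : ℤ}
    (h1 : |a + b| < (2 : ℝ) ^ p * (2 : ℝ) ^ e)
    (h2 : Mul2 e (RD p (a + b))) (h3 : a + b < RD p (a + b) + (2 : ℝ) ^ e)
    (h4 : |RD p (a + b)| ≤ (2 : ℝ) ^ p * (2 : ℝ) ^ e) :
    RD p (a + b) - RD p (RD p (a + b) - b) ∈ Fp p ∧
      (RD p (a + b) - b) - RD p (RD p (a + b) - b) < 2 * (2 : ℝ) ^ e := by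
  have hp1 : 1 ≤ p := by omega
  have hle := rd_le hp1 (a + b)
  have hsm := rd_mem hp1 (a + b)
  generalize hs : RD p (a + b) = s at *
  have hq := q_pos e
  have hP : (4 : ℝ) ≤ 2 ^ p := by
    calc (4 : ℝ) = 2 ^ 2 := by norm_num
      _ ≤ 2 ^ p := pow_le_pow_right₀ (by norm_num) hp
  -- nothing is left to prove when `s - b` is itself a floating-point number
  have exact_case : s - b ∈ Fp p → s - RD p (s - b) ∈ Fp p ∧
      (s - b) - RD p (s - b) < 2 * (2 : ℝ) ^ e := by
    intro h
    rw [rd_eq hp1 h]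
    refine ⟨by simpa using hb, by simpa using hq⟩
  by_cases hx : s - b = 0
  · exact exact_case (by rw [hx]; exact zero_mem_Fp p)
  obtain ⟨f, g1, g2, g3, g4, g5, -⟩ := rd_spec hp1 hx
  have hle2 := rd_le hp1 (s - b)
  have hf := q_pos f
  rcases le_or_gt f e with hfe | hef
  · have hqf := q_le hfe
    rcases lt_or_ge |b| ((2 : ℝ) ^ p * (2 : ℝ) ^ f) with hb1 | hb1
    · refine ⟨mem_of hp1 ((h2.mono hfe).sub g3) ?_, by linarith⟩
      rw [abs_lt] at hb1 ⊢
      constructor <;> linarith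
    · have hbm : Mul2 f b := mul2_of_le hb (by linarith [abs_nonneg b])
      exact exact_case (mem_of hp1 ((h2.mono hfe).sub hbm) (by linarith))
  · have hqf := q_lt hef
    rcases mul2_or hb e with hbm | hbs
    · rcases mul2_or ha e with ham | has
      · have hab : a + b ∈ Fp p := mem_of hp1 (ham.add hbm) (by linarith)
        rw [rd_eq hp1 hab] at hs
        exact exact_case (by rw [← hs]; simpa using ha)
      · -- then `s - b` would be too small for its binade
        exfalso
        have : |s - b| ≤ |a| + (2 : ℝ) ^ e := by
          have h5 := neg_abs_le a
          have h6 := le_abs_self a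
          rw [abs_le]
          constructor <;> linarith
        nlinarith
    · have hfe : f ≤ e + 1 := by
        by_contra! hc
        have h5 := q_lt hc
        rw [q_succ] at h5
        have h6 := abs_sub s b
        nlinarith
      have h7 := q_le hfe
      rw [q_succ] at h7
      refine ⟨mem_of hp1 (h2.sub (g3.mono hef.le)) ?_, by linarith⟩
      have h8 := abs_lt.mp (show |b| < (2 : ℝ) ^ p * (2 : ℝ) ^ e / 2 by linarith)
      rw [abs_lt]
      constructor <;> nlinarith

lemma twoSum_snd_of_exact {p : ℕ} (hp : 1 ≤ p) {a b : ℝ} (ha : a ∈ Fp p) (hb : b ∈ Fp p)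
    (h : a + b ∈ Fp p) : (twoSum (RD p) a b).2 = 0 := by
  simp only [twoSum]
  simp [rd_eq hp h, rd_eq hp ha, rd_eq hp hb, rd_eq hp (zero_mem_Fp p)]

/-- The error term of `2Sum` never exceeds the exact error, and it is at most two ulps of `a + b`
in absolute value; here `u = 2^(1-p)`. -/
lemma twoSum_snd {p : ℕ} (hp : 2 ≤ p) {a b : ℝ} (ha : a ∈ Fp p) (hb : b ∈ Fp p) {u : ℝ}
    (hu : u * 2 ^ p = 2) :
    RD p (a + b) + (twoSum (RD p) a b).2 ≤ a + b ∧
      |(twoSum (RD p) a b).2| ≤ 2 * u * |a + b| := by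
  have hp1 : 1 ≤ p := by omega
  by_cases hab : a + b = 0
  · have h0 : a + b ∈ Fp p := by rw [hab]; exact zero_mem_Fp p
    rw [twoSum_snd_of_exact hp1 ha hb h0, rd_eq hp1 h0]
    simp [hab]
  obtain ⟨e, h0, h1, h2, h3, h4, -⟩ := rd_spec hp1 hab
  obtain ⟨k1, k2⟩ := twoSum_aux hp ha hb h1 h2 h3 h4
  simp only [twoSum]
  rw [rd_eq hp1 k1]
  have hle := rd_le hp1 (a + b)
  generalize RD p (a + b) = s at *
  have hle2 := rd_le hp1 (s - b)
  generalize RD p (s - b) = a' at *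
  have hq := q_pos e
  have hP : (4 : ℝ) ≤ 2 ^ p := by
    calc (4 : ℝ) = 2 ^ 2 := by norm_num
      _ ≤ 2 ^ p := pow_le_pow_right₀ (by norm_num) hp
  have hu0 : 0 < u := by by_contra! h; nlinarith
  have hm : -(2 * (2 : ℝ) ^ e) ∈ Fp p := by
    refine mem_of hp1 (e := e) ⟨-2, by push_cast; ring⟩ ?_
    rw [abs_neg, abs_of_pos (by positivity)]
    nlinarith
  have r1 := rd_le hp1 (a - a')
  have r2 := rd_le hp1 (b - (s - a'))
  have r3 := rd_le hp1 (RD p (a - a') + RD p (b - (s - a')))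
  have l1 := le_rd hp1 (zero_mem_Fp p) (show (0 : ℝ) ≤ a - a' by linarith)
  have l2 := le_rd hp1 hm (show _ ≤ b - (s - a') by linarith)
  have l3 := le_rd hp1 hm (show _ ≤ RD p (a - a') + RD p (b - (s - a')) by linarith)
  have hue : u * (2 ^ p * (2 : ℝ) ^ e) = 2 * (2 : ℝ) ^ e := by rw [← mul_assoc, hu]
  have hub : 2 * (2 : ℝ) ^ e ≤ 2 * u * |a + b| := by nlinarith
  refine ⟨by linarith, ?_⟩
  rw [abs_le]
  constructor <;> linarith

/-- `RD(a+b) - a` is a floating-point number if `a` is a multiple of `2^k` and `b` is less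
than `2^p` such units. -/
lemma fast_mem {p : ℕ} (hp : 2 ≤ p) {a b : ℝ} (ha : a ∈ Fp p) (hb : b ∈ Fp p) {k : ℤ}
    (hk : Mul2 k a) (hbk : |b| < (2 : ℝ) ^ p * (2 : ℝ) ^ k) : RD p (a + b) - a ∈ Fp p := by
  have hp1 : 1 ≤ p := by omega
  by_cases ha0 : a = 0
  · subst ha0
    simpa using rd_mem hp1 _
  -- the unit may be enlarged to the ulp of `a`, which makes `a` less than `2^p` units
  obtain ⟨k, hk, hbk, hak⟩ : ∃ k : ℤ, Mul2 k a ∧ |b| < (2 : ℝ) ^ p * (2 : ℝ) ^ k ∧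
      |a| < (2 : ℝ) ^ p * (2 : ℝ) ^ k := by
    obtain ⟨j, j1, j2⟩ := exists_exp p ha0
    rcases le_or_gt k j with h | h
    · have := q_le h
      have hP : (0 : ℝ) < 2 ^ p := by positivity
      exact ⟨j, mul2_of_le ha j1, by nlinarith, j2⟩
    · have := q_lt h
      have hP : (0 : ℝ) < 2 ^ p := by positivity
      exact ⟨k, hk, hbk, by nlinarith [q_pos j]⟩
  have exact_case : a + b ∈ Fp p → RD p (a + b) - a ∈ Fp p := by
    intro h
    rw [rd_eq hp1 h]
    simpa using hb
  by_cases hab : a + b = 0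
  · exact exact_case (by rw [hab]; exact zero_mem_Fp p)
  obtain ⟨e, h1, h2, h3, h4, h5, -⟩ := rd_spec hp1 hab
  have hle := rd_le hp1 (a + b)
  have hqe := q_pos e
  have hqk := q_pos k
  have hP : (4 : ℝ) ≤ 2 ^ p := by
    calc (4 : ℝ) = 2 ^ 2 := by norm_num
      _ ≤ 2 ^ p := pow_le_pow_right₀ (by norm_num) hp
  rcases le_or_gt e k with hek | hke
  · rcases lt_or_ge |b| ((2 : ℝ) ^ p * (2 : ℝ) ^ e) with hb1 | hb1
    · refine mem_of hp1 (h3.sub (hk.mono hek)) ?_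
      rw [abs_lt] at hb1 ⊢
      constructor <;> linarith
    · have hbm : Mul2 e b := mul2_of_le hb (by linarith [abs_nonneg b])
      exact exact_case (mem_of hp1 ((hk.mono hek).add hbm) (by linarith))
  · have hek : e = k + 1 := by
      by_contra hne
      have h6 := q_lt (show k + 1 < e by omega)
      rw [q_succ] at h6
      have h7 := abs_add_le a b
      nlinarith
    subst hek
    rw [q_succ] at *
    have hd := h3.mono hke.le |>.sub hk
    rcases mul2_or hb k with hbm | hbs
    · -- the error is a multiple of `2^k` less than `2 * 2^k`, hence at most `2^k`
      have herr : a + b ≤ RD p (a + b) + (2 : ℝ) ^ k := by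
        obtain ⟨m, hm⟩ := ((hk.add hbm).sub (h3.mono hke.le))
        have : (m : ℝ) < 2 := by
          by_contra! hc
          nlinarith
        have : m < 2 := by exact_mod_cast this
        have : (m : ℝ) ≤ 1 := by exact_mod_cast (show m ≤ 1 by omega)
        nlinarith
      refine mem_of hp1 hd ?_
      rw [abs_lt] at hbk ⊢
      constructor <;> linarith
    · refine mem_of hp1 hd ?_
      have h8 := abs_lt.mp (show |b| < (2 : ℝ) ^ p * (2 : ℝ) ^ k / 2 by linarith)
      rw [abs_lt]
      constructor <;> nlinarith

lemma fast_mem_of_abs_le {p : ℕ} (hp : 2 ≤ p) {a b : ℝ} (ha : a ∈ Fp p) (hb : b ∈ Fp p)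
    (h : |b| ≤ |a|) : RD p (a + b) - a ∈ Fp p := by
  by_cases ha0 : a = 0
  · subst ha0
    simpa using rd_mem (by omega) _
  · obtain ⟨k, k1, k2⟩ := exists_exp p ha0
    exact fast_mem hp ha hb (mul2_of_le ha k1) (by linarith)

/-- The error term of `Fast2Sum`, once the inner subtraction is known to be exact. -/
lemma fast2Sum_snd {p : ℕ} (hp : 1 ≤ p) {u : ℝ} (hu : u * 2 ^ p = 2) {a b : ℝ}
    (h : RD p (a + b) - a ∈ Fp p) :
    RD p (a + b) + (fast2Sum (RD p) a b).2 ≤ a + b ∧ 0 ≤ (fast2Sum (RD p) a b).2 ∧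
      (fast2Sum (RD p) a b).2 ≤ u * |a + b| := by
  simp only [fast2Sum]
  rw [rd_eq hp h]
  have h1 := rd_le hp (a + b)
  have h2 := rd_err hp hu (a + b)
  have h3 := rd_le hp (b - (RD p (a + b) - a))
  have h4 := le_rd hp (zero_mem_Fp p) (show 0 ≤ b - (RD p (a + b) - a) by linarith)
  exact ⟨by linarith, h4, by linarith⟩

/-! ### Accurate double-word addition -/

lemma cancel_of_le {p : ℕ} (hp : 1 ≤ p) {x y : ℝ} (hx : x ∈ Fp p) (hy : y ∈ Fp p)
    (hyx : |y| ≤ |x|) (h : |x + y| ≤ (|x| + |y|) / 6) :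
    ∃ k : ℤ, Mul2 k (x + y) ∧ x + y ∈ Fp p ∧ |x| + |y| < 5 / 2 * ((2 : ℝ) ^ p * (2 : ℝ) ^ k) := by
  have h1 : |x| - |y| ≤ |x + y| := by
    have := abs_sub_abs_le_abs_sub x (-y)
    rwa [abs_neg, sub_neg_eq_add] at this
  by_cases hy0 : y = 0
  · subst hy0
    rw [abs_zero] at *
    have hx0 : x = 0 := abs_eq_zero.mp (by linarith)
    subst hx0
    refine ⟨0, ⟨0, by simp⟩, by simpa using hx, ?_⟩
    rw [abs_zero]
    simp
  · obtain ⟨k, k1, k2⟩ := exists_exp p hy0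
    have hm : Mul2 k (x + y) := (mul2_of_le hx (by linarith)).add (mul2_of_le hy k1)
    have hq := q_pos k
    exact ⟨k, hm, mem_of hp hm (by linarith), by linarith⟩

/-- Strong cancellation makes the sum exact, and a multiple of a unit `2^k` in which both operands
are small. For nonzero operands `2^k` is the ulp of the smaller one. -/
lemma cancel {p : ℕ} (hp : 1 ≤ p) {x y : ℝ} (hx : x ∈ Fp p) (hy : y ∈ Fp p)
    (h : |x + y| ≤ (|x| + |y|) / 6) :
    ∃ k : ℤ, Mul2 k (x + y) ∧ x + y ∈ Fp p ∧ |x| + |y| < 5 / 2 * ((2 : ℝ) ^ p * (2 : ℝ) ^ k) := by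
  rcases le_total |y| |x| with h1 | h1
  · exact cancel_of_le hp hx hy h1 h
  · have := cancel_of_le hp hy hx h1 (by rw [add_comm y x, add_comm |y| |x|]; exact h)
    rwa [add_comm y x, add_comm |y| |x|] at this

lemma accurateAdd_rd_le {p : ℕ} (hp : 6 ≤ p) {xh xl yh yl : ℝ}
    (hxh : xh ∈ Fp p) (hxl : xl ∈ Fp p) (hyh : yh ∈ Fp p) (hyl : yl ∈ Fp p)
    (hx : |xl| ≤ |xh| / 8) (hy : |yl| ≤ |yh| / 8) :
    (accurateAdd (RD p) xh xl yh yl).1 + (accurateAdd (RD p) xh xl yh yl).2 ≤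
      xh + xl + yh + yl := by
  have hp1 : 1 ≤ p := by omega
  have hp2 : 2 ≤ p := by omega
  have hP : (64 : ℝ) ≤ 2 ^ p := by
    calc (64 : ℝ) = 2 ^ 6 := by norm_num
      _ ≤ 2 ^ p := pow_le_pow_right₀ (by norm_num) hp
  obtain ⟨u, hu⟩ : ∃ u : ℝ, u * 2 ^ p = 2 := ⟨2 / 2 ^ p, by field_simp⟩
  have hu0 : 0 < u := by by_contra! h; nlinarith
  have hu1 : u ≤ 1 / 32 := by by_contra! h; nlinarith
  -- rounding bounds with the worst case `u = 1/32` inserted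
  have rle : ∀ x, |RD p x| ≤ 33 / 32 * |x| := fun x => by
    have := rd_abs_le hp1 hu x
    nlinarith [abs_nonneg x]
  have ler : ∀ x, 31 / 32 * |x| ≤ |RD p x| := fun x => by
    have := le_rd_abs hp1 hu x
    nlinarith [abs_nonneg x]
  obtain ⟨s1, s2⟩ := twoSum_snd hp2 hxh hyh hu
  obtain ⟨t1, t2⟩ := twoSum_snd hp2 hxl hyl hu
  have s3 := twoSum_snd_of_exact hp1 hxh hyh
  have hs : (twoSum (RD p) xh yh).1 = RD p (xh + yh) := rfl
  have ht : (twoSum (RD p) xl yl).1 = RD p (xl + yl) := rfl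
  have hf : ∀ a b, (fast2Sum (RD p) a b).1 = RD p (a + b) := fun _ _ => rfl
  simp only [accurateAdd, hs, ht, hf]
  generalize (twoSum (RD p) xh yh).2 = sl at *
  generalize (twoSum (RD p) xl yl).2 = tl at *
  have hL : |xl + yl| ≤ (|xh| + |yh|) / 8 := by linarith [abs_add_le xl yl]
  have shm := rd_mem hp1 (xh + yh)
  have thm := rd_mem hp1 (xl + yl)
  have sh1 := ler (xh + yh)
  have th1 := rle (xl + yl)
  have sl1 : |sl| ≤ |xh + yh| / 16 := by nlinarith [abs_nonneg (xh + yh)]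
  have tl1 : |tl| ≤ |xl + yl| / 16 := by nlinarith [abs_nonneg (xl + yl)]
  have hS : 0 ≤ |xh| + |yh| := by positivity
  have cm := rd_mem hp1 (sl + RD p (xl + yl))
  have c1 := rle (sl + RD p (xl + yl))
  have c2 := rd_le hp1 (sl + RD p (xl + yl))
  have c3 := abs_add_le sl (RD p (xl + yl))
  have hcl := cancel hp1 hxh hyh
  -- the first `Fast2Sum`
  have F1 : RD p (RD p (xh + yh) + RD p (sl + RD p (xl + yl))) - RD p (xh + yh) ∈ Fp p := by
    rcases le_or_gt |xh + yh| ((|xh| + |yh|) / 6) with h | h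
    · obtain ⟨k, k1, k2, k3⟩ := hcl h
      rw [rd_eq hp1 k2] at shm ⊢
      refine fast_mem hp2 shm cm k1 ?_
      linarith
    · exact fast_mem_of_abs_le hp2 shm cm (by linarith)
  obtain ⟨v1, v2, v3⟩ := fast2Sum_snd hp1 hu F1
  generalize hsh : RD p (xh + yh) = sh at *
  generalize hth : RD p (xl + yl) = th at *
  generalize hc : RD p (sl + th) = c at *
  generalize (fast2Sum (RD p) sh c).2 = vl at *
  have vm := rd_mem hp1 (sh + c)
  have vh1 := ler (sh + c)
  have wm := rd_mem hp1 (tl + vl)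
  have w1 := rle (tl + vl)
  have w2 := rd_le hp1 (tl + vl)
  have w3 := abs_add_le tl vl
  rw [abs_of_nonneg v2] at w3
  have vl1 : vl ≤ |sh + c| / 32 := by nlinarith [abs_nonneg (sh + c)]
  -- the second `Fast2Sum`
  have F2 : RD p (RD p (sh + c) + RD p (tl + vl)) - RD p (sh + c) ∈ Fp p := by
    rcases le_or_gt (|xl + yl| / 8) |sh + c| with h | h
    · exact fast_mem_of_abs_le hp2 vm wm (by linarith)
    · -- both additions of high words cancel, so they are exact and `vl = 0`
      have hl0 : xl + yl ≠ 0 := by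
        intro h0
        rw [h0, abs_zero] at h
        linarith [abs_nonneg (sh + c)]
      have h1 : |sh| ≤ |sh + c| + |c| := by
        have := abs_sub (sh + c) c
        rwa [add_sub_cancel_right] at this
      obtain ⟨-, -, k2, -⟩ := hcl (by linarith)
      have hsl := s3 k2
      rw [hsl, zero_add, rd_eq hp1 thm] at hc
      subst hc
      obtain ⟨k, l1, l2, l3, l4, l5, l6⟩ := rd_spec hp1 hl0
      rw [hth] at l3 l4 l5 l6
      have hqk : (2 : ℝ) ^ k = 2 * (2 : ℝ) ^ (k - 1) := by
        rw [← q_succ]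
        congr 1
        ring
      have hq := q_pos (k - 1)
      have hPq : (2 : ℝ) ^ p * (2 : ℝ) ^ k = 2 * ((2 : ℝ) ^ p * (2 : ℝ) ^ (k - 1)) := by
        rw [hqk]
        ring
      have hPq' := mul_le_mul_of_nonneg_right hP hq.le
      have h2 : |th| ≤ |sh + th| + |sh| := by
        have := abs_sub (sh + th) sh
        rwa [add_sub_cancel_left] at this
      have hsm : Mul2 (k - 1) sh := by
        refine mul2_of_le shm ?_
        linarith
      have hvm := hsm.add (l3.mono (by omega))
      have hvF : sh + th ∈ Fp p := by
        refine mem_of hp1 hvm ?_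
        linarith
      rw [rd_eq hp1 hvF] at v1 vm ⊢
      have hvl : vl = 0 := le_antisymm (by linarith) v2
      refine fast_mem hp2 vm wm hvm ?_
      have h3 : |tl| ≤ 4 * (2 : ℝ) ^ k := by
        have : u * (2 ^ p * (2 : ℝ) ^ k) = 2 * (2 : ℝ) ^ k := by rw [← mul_assoc, hu]
        have := mul_le_mul_of_nonneg_left l2.le hu0.le
        linarith
      linarith
  obtain ⟨z1, -, -⟩ := fast2Sum_snd hp1 hu F2
  linarith

/-! ### Exchanging the rounding directions -/

lemma ru_neg (p : ℕ) (x : ℝ) : RU p x = -RD p (-x) := by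
  have : {f : ℝ | f ∈ Fp p ∧ f ≤ -x} = -{f : ℝ | f ∈ Fp p ∧ x ≤ f} := by
    ext f
    simp only [Set.mem_neg, Set.mem_ofPred_eq]
    constructor
    · rintro ⟨h1, h2⟩
      exact ⟨neg_mem_Fp h1, by linarith⟩
    · rintro ⟨h1, h2⟩
      exact ⟨by simpa using neg_mem_Fp h1, by linarith⟩
  rw [RU, RD, this, Real.sInf_def]

lemma twoSum_ru (p : ℕ) (a b : ℝ) :
    twoSum (RU p) a b = -twoSum (RD p) (-a) (-b) := by
  simp only [twoSum, ru_neg, Prod.neg_mk, Prod.mk.injEq]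
  ring_nf
  simp

lemma fast2Sum_ru (p : ℕ) (a b : ℝ) :
    fast2Sum (RU p) a b = -fast2Sum (RD p) (-a) (-b) := by
  simp only [fast2Sum, ru_neg, Prod.neg_mk, Prod.mk.injEq]
  ring_nf
  simp

lemma accurateAdd_ru (p : ℕ) (xh xl yh yl : ℝ) :
    accurateAdd (RU p) xh xl yh yl = -accurateAdd (RD p) (-xh) (-xl) (-yh) (-yl) := by
  simp only [accurateAdd, twoSum_ru, fast2Sum_ru, ru_neg, Prod.fst_neg, Prod.snd_neg, neg_neg,
    neg_add_rev]
  ring_nf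

theorem accurate_directed_rounding_error_sign
    (p : ℕ) (hp : 6 ≤ p) (u : ℝ) (hu : u = (2 : ℝ) ^ (1 - (p : ℤ)))
    (ox oy : ℝ) (hox1 : 1 ≤ ox) (hox2 : ox ≤ 1 / (8 * u) - 2)
    (hoy1 : 1 ≤ oy) (hoy2 : oy ≤ 1 / (8 * u) - 2)
    (xh xl yh yl : ℝ)
    (hxh : xh ∈ Fp p) (hxl : xl ∈ Fp p) (hyh : yh ∈ Fp p) (hyl : yl ∈ Fp p)
    (hovx : |xl| ≤ ox * u * |xh|) (hovy : |yl| ≤ oy * u * |yh|) :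
    (accurateAdd (RD p) xh xl yh yl).1 + (accurateAdd (RD p) xh xl yh yl).2 ≤
        xh + xl + yh + yl ∧
      xh + xl + yh + yl ≤
        (accurateAdd (RU p) xh xl yh yl).1 + (accurateAdd (RU p) xh xl yh yl).2 := by
  have hu0 : 0 < u := by rw [hu]; positivity
  -- the overlap bound gives `o * u ≤ 1 / 8`
  have key : ∀ o a b : ℝ, o ≤ 1 / (8 * u) - 2 → |a| ≤ o * u * |b| → |a| ≤ |b| / 8 := by
    intro o a b ho h
    have h1 : o * u ≤ 1 / 8 := by
      calc o * u ≤ (1 / (8 * u) - 2) * u := mul_le_mul_of_nonneg_right ho hu0.le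
        _ = 1 / 8 - 2 * u := by field_simp
        _ ≤ 1 / 8 := by linarith
    nlinarith [abs_nonneg b]
  have hx := key ox xl xh hox2 hovx
  have hy := key oy yl yh hoy2 hovy
  refine ⟨accurateAdd_rd_le hp hxh hxl hyh hyl hx hy, ?_⟩
  have h := accurateAdd_rd_le hp (neg_mem_Fp hxh) (neg_mem_Fp hxl) (neg_mem_Fp hyh)
    (neg_mem_Fp hyl) (by simpa using hx) (by simpa using hy)
  rw [accurateAdd_ru, Prod.fst_neg, Prod.snd_neg]
  linarith
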